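/- For every pair of nonnegative integers (α, β) with α + β = 20, there exists a partition of the edge set of K_42 minus a perfect matching into α C_3-factors and β C_7-factors. That is, HWP(42; 3, 7) = {(α, β) : α + β = 20}. -/

import Mathlib

open SimpleGraph

/-- A `C_k`-factor: a spanning 2-regular subgraph all of whose connected
components (necessarily cycles) have exactly `k` vertices. -/
def IsCycleFactor {V : Type*} (H : SimpleGraph V) (k : ℕ) : Prop :=
  (∀ v : V, (H.neighborSet v).ncard = 2) ∧
  (∀ v : V, (H.connectedComponentMk v).supp.ncard = k)

/-- A 1-factor (perfect matching): every vertex has exactly one neighbour. -/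
def IsOneFactor {V : Type*} (H : SimpleGraph V) : Prop :=
  ∀ v : V, (H.neighborSet v).ncard = 1

/-- `F 0, …, F (N-1)` partitions the edge set of `G`. -/
def IsDecompOn {V : Type*} (G : SimpleGraph V) (F : ℕ → SimpleGraph V) (N : ℕ) : Prop :=
  (∀ i < N, F i ≤ G) ∧
  (∀ i < N, ∀ j < N, i ≠ j → Disjoint (F i).edgeSet (F j).edgeSet) ∧
  G.edgeSet = ⋃ i ∈ Set.Iio N, (F i).edgeSet

/-- A Hamilton–Waterloo decomposition of a graph `G` into `α` `C_m`-factors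
and `β` `C_n`-factors. -/
def IsHWGraph {V : Type*} (G : SimpleGraph V) (m n α β : ℕ) : Prop :=
  ∃ F : ℕ → SimpleGraph V, IsDecompOn G F (α + β) ∧
    (∀ i < α, IsCycleFactor (F i) m) ∧
    (∀ i, α ≤ i → i < α + β → IsCycleFactor (F i) n)

/-- `HW v m n α β`: a partition of `E(K_v)` (for `v` odd) or of `E(K_v)` minus a
perfect matching (for `v` even) into `α` `C_m`-factors and `β` `C_n`-factors. -/
def HW (v m n α β : ℕ) : Prop :=
  ∃ I : SimpleGraph (Fin v),
    (Odd v → I = ⊥) ∧ (Even v → IsOneFactor I) ∧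
    IsHWGraph ((⊤ : SimpleGraph (Fin v)) \ I) m n α β

/-- The complete `u`-partite graph with parts of size `g`. -/
def Kpartite (u g : ℕ) : SimpleGraph (Fin u × Fin g) :=
  SimpleGraph.fromRel (fun a b => a.1 ≠ b.1)

/-- The Cayley graph on an additive group with connection set `S`. -/
def cayley (Γ : Type*) [AddGroup Γ] (S : Set Γ) : SimpleGraph Γ :=
  SimpleGraph.fromRel (fun a b => a - b ∈ S)

/-!
Necessity is a degree count: a vertex has degree `2` in each of the `α + β` factors and `40` in
`K_42` minus a perfect matching.

For sufficiency, remove from `K_42` the edges of difference `21` in `ℤ/42ℤ`; what remains is the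
Cayley graph with differences `1, …, 20`. Up to sign these are three triples
`{4, 16, 20}`, `{5, 8, 13}`, `{17, 2, 19}` of the form `{a, b, a + b}` and a core of `11`
differences. The edges of a triple can be split into three `C_3`-factors as well as into three
`C_7`-factors, and the core can be split into `11` factors of which `β ∈ {0, 1, 2, 9, 10, 11}`
are `C_7`-factors. Every `β ≤ 20` is `3t + r` with `t ≤ 3` and `r` one of these numbers.

The splittings of the core, and those of the triples into `C_7`-factors, come from a computer
search (exact cover) for base cycles, developed by translations. A factor is given by its cycles,
and since a cycle of prime length `k` is an orbit of a permutation `σ` with `σ ^ k = 1`, the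
partition of the edges reduces to listing, for each vertex, its images under all `σ` and `σ⁻¹`.
-/

section Counting

theorem IsDecompOn.ncard_neighborSet {V : Type*} [Finite V] {G : SimpleGraph V}
    {F : ℕ → SimpleGraph V} {N d : ℕ} (h : IsDecompOn G F N) (u : V)
    (hF : ∀ i < N, ((F i).neighborSet u).ncard = d) : (G.neighborSet u).ncard = N * d := by
  obtain ⟨-, hdisj, hcover⟩ := h
  have hunion : G.neighborSet u = ⋃ i ∈ Set.Iio N, (F i).neighborSet u := by
    ext w
    simpa using Set.ext_iff.1 hcover s(u, w)
  have hpairwise : (Set.Iio N).PairwiseDisjoint fun i => (F i).neighborSet u := by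
    intro i hi j hj hij
    exact (hdisj i hi j hj hij).preimage fun w => s(u, w)
  rw [hunion, (Set.finite_Iio N).ncard_biUnion (fun _ _ => Set.toFinite _) hpairwise,
    finsum_mem_congr (s := Set.Iio N) rfl hF, ← Finset.coe_Iio, finsum_mem_coe_finset,
    Finset.sum_const, Nat.card_Iio, smul_eq_mul]

theorem IsOneFactor.ncard_neighborSet_top_sdiff {V : Type*} [Finite V] {I : SimpleGraph V}
    (hI : IsOneFactor I) (u : V) :
    (((⊤ : SimpleGraph V) \ I).neighborSet u).ncard + 2 = Nat.card V := by
  have hsplit : ((⊤ : SimpleGraph V) \ I).neighborSet u = {u}ᶜ \ I.neighborSet u := by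
    ext w
    simp [eq_comm]
  have hsub : I.neighborSet u ⊆ {u}ᶜ := fun w hw => (I.ne_of_adj hw).symm
  have hdiff := Set.ncard_sdiff_add_ncard_of_subset hsub
  have hcompl := Set.ncard_add_ncard_compl {u}
  rw [hI u] at hdiff
  rw [Set.ncard_singleton] at hcompl
  rw [hsplit]
  lia

theorem HW.two_mul_add_two {v m n α β : ℕ} (hv : Even v) (hpos : 0 < v) (h : HW v m n α β) :
    2 * (α + β) + 2 = v := by
  obtain ⟨I, -, hI, F, hF, hm, hn⟩ := h
  have hregular : ∀ i < α + β, ((F i).neighborSet ⟨0, hpos⟩).ncard = 2 := fun i hi =>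
    (lt_or_ge i α).elim (fun hα => (hm i hα).1 _) (fun hα => (hn i hα hi).1 _)
  have hdegree := (hI hv).ncard_neighborSet_top_sdiff ⟨0, hpos⟩
  rw [hF.ncard_neighborSet _ hregular, Nat.card_fin] at hdegree
  lia

end Counting

section PermGraph

variable {V : Type*}

/-- The graph joining every `u` to `σ u`; its components are the orbits of `σ`, and a
2-factor is handled as `permGraph σ` for a `σ` that runs once around each of its cycles. -/
def permGraph (σ : Equiv.Perm V) : SimpleGraph V :=
  SimpleGraph.fromRel fun u v => σ u = v

theorem neighborSet_permGraph {σ : Equiv.Perm V} {u : V} (hu : σ u ≠ u) :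
    (permGraph σ).neighborSet u = {σ u, σ⁻¹ u} := by
  ext v
  simp only [mem_neighborSet, permGraph, fromRel_adj, Set.mem_insert_iff, Set.mem_singleton_iff,
    Equiv.Perm.eq_inv_iff_eq]
  constructor
  · rintro ⟨-, h | h⟩
    exacts [.inl h.symm, .inr h]
  · rintro (rfl | h)
    · exact ⟨hu.symm, .inl rfl⟩
    · exact ⟨fun huv => hu (huv ▸ h), .inr h⟩

theorem reachable_permGraph_iff {σ : Equiv.Perm V} {u v : V} :
    (permGraph σ).Reachable u v ↔ σ.SameCycle u v := by
  constructor
  · rintro ⟨p⟩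
    induction p with
    | nil => exact .refl _ _
    | cons hadj _ ih =>
      rcases hadj.2 with rfl | rfl
      · exact Equiv.Perm.sameCycle_apply_left.1 ih
      · exact Equiv.Perm.sameCycle_apply_left.2 ih
  · have reachable_apply (w : V) : (permGraph σ).Reachable w (σ w) := by
      by_cases hw : w = σ w
      · exact hw ▸ .refl _
      · exact (show (permGraph σ).Adj w (σ w) from ⟨hw, .inl rfl⟩).reachable
    rintro ⟨i, rfl⟩
    induction i using Int.induction_on with
    | zero => exact .refl _
    | succ i ih =>
      rw [add_comm, zpow_add, zpow_one, Equiv.Perm.mul_apply]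
      exact ih.trans (reachable_apply _)
    | pred i ih =>
      have hstep := reachable_apply ((σ ^ (-(i : ℤ) - 1)) u)
      rw [← Equiv.Perm.mul_apply, ← zpow_one_add, add_sub_cancel] at hstep
      exact ih.trans hstep.symm

theorem ncard_supp_permGraph (σ : Equiv.Perm V) (u : V) :
    ((permGraph σ).connectedComponentMk u).supp.ncard = Function.minimalPeriod σ u := by
  have hsupp : ((permGraph σ).connectedComponentMk u).supp
      = MulAction.orbit (Subgroup.zpowers σ) u := by
    ext v
    rw [ConnectedComponent.mem_supp_iff, ConnectedComponent.eq, reachable_permGraph_iff,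
      Equiv.Perm.sameCycle_comm]
    simp [Equiv.Perm.SameCycle, MulAction.mem_orbit_iff, Subgroup.smul_def]
  rw [hsupp, ← Nat.card_coe_set_eq, Nat.card_congr (MulAction.orbitZPowersEquiv σ u), Nat.card_zmod]
  rfl

theorem isCycleFactor_permGraph {σ : Equiv.Perm V} {k : ℕ} (hk : k.Prime) (hσ : σ ^ k = 1)
    (hfix : ∀ u, σ u ≠ u) (hinv : ∀ u, σ u ≠ σ⁻¹ u) : IsCycleFactor (permGraph σ) k := by
  have : Fact k.Prime := ⟨hk⟩
  refine ⟨fun u => ?_, fun u => ?_⟩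
  · rw [neighborSet_permGraph (hfix u), Set.ncard_pair (hinv u)]
  · have hperiodic : Function.IsPeriodicPt σ k u := by
      rw [Function.IsPeriodicPt, Function.IsFixedPt, ← Equiv.Perm.coe_pow, hσ, Equiv.Perm.one_apply]
    rw [ncard_supp_permGraph, Function.minimalPeriod_eq_prime hperiodic (hfix u)]

end PermGraph

section NeighborList

variable {V : Type*}

/-- The neighbours of `u` in the graphs `permGraph σ`, `σ ∈ L`, one graph after the other and
with multiplicity, so that the graphs are edge-disjoint and 2-regular when nothing is repeated. -/
def neighborList (L : List (Equiv.Perm V)) (u : V) : List V :=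
  L.flatMap fun σ => [σ u, σ⁻¹ u]

variable {G : SimpleGraph V} {L : List (Equiv.Perm V)}

theorem mem_neighborList_iff (hfix : ∀ σ ∈ L, ∀ u, σ u ≠ u) {u v : V} :
    v ∈ neighborList L u ↔ ∃ σ ∈ L, (permGraph σ).Adj u v := by
  have hadj : ∀ σ ∈ L, (v ∈ [σ u, σ⁻¹ u] ↔ (permGraph σ).Adj u v) := fun σ hσ => by
    rw [← mem_neighborSet, neighborSet_permGraph (hfix σ hσ u)]
    simp
  simp only [neighborList, List.mem_flatMap]
  exact exists_congr fun σ => and_congr_right (hadj σ)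

theorem isDecompOn_permGraph (hfix : ∀ σ ∈ L, ∀ u, σ u ≠ u)
    (hnodup : ∀ u, (neighborList L u).Nodup) (hG : ∀ u v, G.Adj u v ↔ v ∈ neighborList L u) :
    IsDecompOn G (fun i => permGraph (L.getD i 1)) L.length := by
  have hadj : ∀ u v, G.Adj u v ↔ ∃ i < L.length, (permGraph (L.getD i 1)).Adj u v := by
    intro u v
    rw [hG, mem_neighborList_iff hfix, List.exists_mem_iff_getElem]
    exact ⟨fun ⟨i, hi, h⟩ => ⟨i, hi, by rwa [List.getD_eq_getElem _ _ hi]⟩,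
      fun ⟨i, hi, h⟩ => ⟨i, hi, by rwa [List.getD_eq_getElem _ _ hi] at h⟩⟩
  refine ⟨fun i hi u v h => (hadj u v).2 ⟨i, hi, h⟩, fun i hi j hj hij => ?_, ?_⟩
  · wlog hlt : i < j
    · exact (this hfix hnodup hG hadj j hj i hi hij.symm (by lia)).symm
    rw [disjoint_edgeSet, ← disjoint_neighborSet]
    intro u
    beta_reduce
    have hdisj := List.pairwise_iff_getElem.1 (List.nodup_flatMap.1 (hnodup u)).2 i j hi hj hlt
    rw [List.getD_eq_getElem _ _ hi, List.getD_eq_getElem _ _ hj,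
      neighborSet_permGraph (hfix _ (L.getElem_mem hi) u),
      neighborSet_permGraph (hfix _ (L.getElem_mem hj) u), Set.disjoint_left]
    simpa [Function.onFun, List.Disjoint] using hdisj
  · ext e
    induction e with | _ u v => simp [hadj]

theorem isHWGraph_of_neighborList {m n : ℕ} {A B : List (Equiv.Perm V)} (hm : m.Prime)
    (hn : n.Prime) (hA : ∀ σ ∈ A, σ ^ m = 1) (hB : ∀ σ ∈ B, σ ^ n = 1)
    (hnodup : ∀ u, (neighborList (A ++ B) u).Nodup)
    (hG : ∀ u v, G.Adj u v ↔ v ∈ neighborList (A ++ B) u) :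
    IsHWGraph G m n A.length B.length := by
  have hmem : ∀ σ ∈ A ++ B, ∀ u, [σ u, σ⁻¹ u] ⊆ neighborList (A ++ B) u :=
    fun σ hσ u v hv => List.mem_flatMap.2 ⟨σ, hσ, hv⟩
  have hfix : ∀ σ ∈ A ++ B, ∀ u, σ u ≠ u := fun σ hσ u hu =>
    G.irrefl ((hG u u).2 (hmem σ hσ u (by simp [hu])))
  have hinv : ∀ σ ∈ A ++ B, ∀ u, σ u ≠ σ⁻¹ u := fun σ hσ u => by
    simpa using (List.nodup_flatMap.1 (hnodup u)).1 σ hσ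
  refine ⟨_, List.length_append ▸ isDecompOn_permGraph hfix hnodup hG, fun i hi => ?_,
    fun i hi hi' => ?_⟩
  · have hσ : (A ++ B).getD i 1 ∈ A := by
      rw [List.getD_append _ _ _ _ hi, List.getD_eq_getElem _ _ hi]
      exact A.getElem_mem hi
    have hσL := List.mem_append_left B hσ
    exact isCycleFactor_permGraph hm (hA _ hσ) (hfix _ hσL) (hinv _ hσL)
  · have hσ : (A ++ B).getD i 1 ∈ B := by
      rw [List.getD_append_right _ _ _ _ hi, List.getD_eq_getElem _ _ (by lia)]
      exact B.getElem_mem (by lia)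
    have hσL := List.mem_append_right A hσ
    exact isCycleFactor_permGraph hn (hB _ hσ) (hfix _ hσL) (hinv _ hσL)

end NeighborList

section CyclePerm

variable {V : Type*} [DecidableEq V]

/-- The permutation running once around each of the cycles listed in `F`. -/
def cyclePerm (F : List (List V)) : Equiv.Perm V :=
  (F.map List.formPerm).prod

/-- `F` lists vertex-disjoint cycles of length `k`. -/
def IsCyclePacking (F : List (List V)) (k : ℕ) : Prop :=
  F.flatten.Nodup ∧ ∀ c ∈ F, c.length = k

instance (F : List (List V)) (k : ℕ) : Decidable (IsCyclePacking F k) :=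
  inferInstanceAs (Decidable (_ ∧ _))

theorem IsCyclePacking.cyclePerm_pow {F : List (List V)} {k : ℕ} (h : IsCyclePacking F k) :
    cyclePerm F ^ k = 1 := by
  obtain ⟨hnodup, hlength⟩ := h
  induction F with
  | nil => simp [cyclePerm]
  | cons c F ih =>
    rw [List.flatten_cons, List.nodup_append'] at hnodup
    rw [List.forall_mem_cons] at hlength
    have hdisjoint : (List.formPerm c).Disjoint (cyclePerm F) := by
      refine Equiv.Perm.disjoint_prod_right _ fun σ hσ => ?_
      obtain ⟨d, hd, rfl⟩ := List.mem_map.1 hσ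
      intro u
      by_cases hu : u ∈ c
      · exact .inr <| List.formPerm_apply_of_notMem fun hud =>
          hnodup.2.2 hu (List.mem_flatten_of_mem hd hud)
      · exact .inl (List.formPerm_apply_of_notMem hu)
    have hcons : cyclePerm (c :: F) = List.formPerm c * cyclePerm F := by simp [cyclePerm]
    rw [hcons, hdisjoint.commute.mul_pow, ih hnodup.2.1 hlength.2, mul_one, ← hlength.1,
      List.formPerm_pow_length_eq_one_of_nodup c hnodup.1]

end CyclePerm

section Factorization

variable {Γ : Type*} [AddGroup Γ]

theorem isOneFactor_cayley_singleton {g : Γ} (hg : g ≠ 0) (hgg : g + g = 0) :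
    IsOneFactor (cayley Γ {g}) := by
  intro u
  have hneighbor : (cayley Γ {g}).neighborSet u = {g + u} := by
    ext v
    have hneg : u - v = g ↔ v - u = g := by
      rw [← neg_sub v u, neg_eq_iff_eq_neg, neg_eq_of_add_eq_zero_left hgg]
    rw [mem_neighborSet, cayley, fromRel_adj, Set.mem_singleton_iff, Set.mem_singleton_iff, hneg,
      or_self, sub_eq_iff_eq_add, Set.mem_singleton_iff, and_iff_right_iff_imp]
    rintro rfl
    exact (add_ne_right.2 hg).symm
  rw [hneighbor, Set.ncard_singleton]

/-- The connection set `±D` of the Cayley graph with differences `D`, listed with multiplicity. -/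
def connectionList (D : List Γ) : List Γ :=
  D.flatMap fun d => [d, -d]

theorem cayley_adj_iff_of_nodup {D : List Γ} (hD : (connectionList D).Nodup) {u v : Γ} :
    (cayley Γ {d | d ∈ D}).Adj u v ↔ v - u ∈ connectionList D := by
  have hzero : 0 ∉ D := fun h => by
    simpa using (List.nodup_flatMap.1 hD).1 0 h
  have hmem : v - u ∈ connectionList D ↔ u - v ∈ D ∨ v - u ∈ D := by
    simp only [connectionList, List.mem_flatMap, List.mem_pair, ← neg_eq_iff_eq_neg, neg_sub,
      and_or_left, exists_or, exists_eq_right', or_comm]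
  rw [hmem, cayley, fromRel_adj, Set.mem_ofPred_eq, Set.mem_ofPred_eq, and_iff_right_iff_imp]
  rintro h rfl
  exact hzero (by simpa using h)

variable [DecidableEq Γ]

/-- The edges `{u, d + u}` with `d ∈ D` can be partitioned into `α` factors of `m`-cycles and
`β` factors of `n`-cycles, each given by the list of its cycles. That the cycles of a factor
visit every vertex is not required separately: for `0 ∉ D` it follows from the condition on
neighbours, since `cyclePerm` fixes the vertices that are not visited. -/
def HasCayleyFactorization (D : List Γ) (m n α β : ℕ) : Prop :=
  ∃ A B : List (List (List Γ)), (A.length = α ∧ B.length = β) ∧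
    (∀ F ∈ A, IsCyclePacking F m) ∧ (∀ F ∈ B, IsCyclePacking F n) ∧
    ∀ u, (neighborList ((A ++ B).map cyclePerm) u).Perm ((connectionList D).map (· + u))

variable {D D' : List Γ} {m n α β α' β' : ℕ}

theorem HasCayleyFactorization.append (h : HasCayleyFactorization D m n α β)
    (h' : HasCayleyFactorization D' m n α' β') :
    HasCayleyFactorization (D ++ D') m n (α + α') (β + β') := by
  obtain ⟨A, B, ⟨rfl, rfl⟩, hA, hB, hD⟩ := h
  obtain ⟨A', B', ⟨rfl, rfl⟩, hA', hB', hD'⟩ := h'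
  refine ⟨A ++ A', B ++ B', by simp, ?_, ?_, fun u => ?_⟩
  · exact List.forall_mem_append.2 ⟨hA, hA'⟩
  · exact List.forall_mem_append.2 ⟨hB, hB'⟩
  · have hperm : ((A ++ A') ++ (B ++ B')).Perm ((A ++ B) ++ (A' ++ B')) := by
      rw [← Multiset.coe_eq_coe]
      simp only [← Multiset.coe_add]
      abel
    refine ((hperm.map cyclePerm).flatMap_right _).trans ?_
    simp only [neighborList, connectionList, List.map_append, List.flatMap_append] at hD hD' ⊢
    exact (hD u).append (hD' u)

theorem HasCayleyFactorization.flatMap {ι : Type*} {l : List ι} {D : ι → List Γ}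
    (hα : ∀ i ∈ l, HasCayleyFactorization (D i) m n α 0)
    (hβ : ∀ i ∈ l, HasCayleyFactorization (D i) m n 0 β) {s t : ℕ} (hst : s + t = l.length) :
    HasCayleyFactorization (l.flatMap D) m n (α * s) (β * t) := by
  induction l generalizing s t with
  | nil =>
    obtain ⟨rfl, rfl⟩ := Nat.add_eq_zero_iff.1 hst
    exact ⟨[], [], by simp [neighborList, connectionList]⟩
  | cons i l ih =>
    rw [List.forall_mem_cons] at hα hβ
    rw [List.length_cons] at hst
    cases s with
    | zero =>
      obtain rfl : t = l.length + 1 := by lia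
      simpa [mul_add, add_comm] using hβ.1.append (ih hα.2 hβ.2 (zero_add l.length))
    | succ s =>
      simpa [mul_add, add_comm] using hα.1.append (ih hα.2 hβ.2 (s := s) (t := t) (by lia))

theorem HasCayleyFactorization.isHWGraph (h : HasCayleyFactorization D m n α β) (hm : m.Prime)
    (hn : n.Prime) (hD : (connectionList D).Nodup) :
    IsHWGraph (cayley Γ {d | d ∈ D}) m n α β := by
  obtain ⟨A, B, ⟨rfl, rfl⟩, hA, hB, hL⟩ := h
  rw [List.map_append] at hL
  rw [← List.length_map (as := A) cyclePerm, ← List.length_map (as := B) cyclePerm]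
  refine isHWGraph_of_neighborList hm hn ?_ ?_ (fun u => ?_) fun u v => ?_
  · exact List.forall_mem_map.2 fun F hF => (hA F hF).cyclePerm_pow
  · exact List.forall_mem_map.2 fun F hF => (hB F hF).cyclePerm_pow
  · exact (hL u).nodup_iff.2 (hD.map (add_left_injective u))
  · rw [cayley_adj_iff_of_nodup hD, (hL u).mem_iff]
    simp only [List.mem_map, ← eq_sub_iff_add_eq, exists_eq_right]

end Factorization

section CyclicGroup

/-- The list of cycles `s + c` with `s ∈ S` and `c ∈ F`. -/
def translates {Γ : Type*} [Add Γ] (S : List Γ) (F : List (List Γ)) : List (List Γ) :=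
  S.flatMap fun s => F.map (List.map (s + ·))

/-- The first `n` multiples of `g` in `ℤ/42ℤ`, the subgroup generated by `g` if `g * n = 42`. -/
def multiples (g n : ℕ) : List (Fin 42) :=
  (List.range n).map fun j => Fin.ofNat 42 (g * j)

/-- The seven factors `s + F` with `s` a multiple of `6`. -/
def sixTranslates (F : List (List (Fin 42))) : List (List (List (Fin 42))) :=
  (multiples 6 7).map fun s => translates [s] F

/-- The `C_7`-factor consisting of all edges of difference `6 * j`, for `j` prime to `7`. -/
def heptagonCosets (j : Fin 42) : List (List (Fin 42)) :=
  translates (multiples 1 6) [(multiples 6 7).map (j * ·)]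

/-- The `C_3`-factor consisting of all edges of difference `14`. -/
def triangleCosets : List (List (Fin 42)) :=
  translates (multiples 1 14) [multiples 14 3]

/-- Three `C_7`-factors using the edges of differences `w`, `10 * w`, `11 * w`, for `w` a unit. -/
def heptagonTriple (w : Fin 42) : List (List (List (Fin 42))) :=
  [[[0, 1, 2, 33, 32, 22, 11], [3, 13, 12, 23, 24, 35, 34]],
   [[0, 10, 11, 1, 32, 21, 31], [2, 12, 22, 33, 34, 23, 13]],
   [[0, 32, 31, 30, 20, 10, 41], [1, 12, 11, 21, 22, 23, 33]]].map fun F =>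
    translates (multiples 14 3) (F.map (List.map (w * ·)))

/-- The differences `a`, `b`, `a + b` of a triangle, for `p = (a, b)`. -/
def triangleDifferences (p : Fin 42 × Fin 42) : List (Fin 42) :=
  [p.1, p.2, p.1 + p.2]

/-- The `(a, b)` for which the edges of differences `a`, `b`, `a + b` are split at choice into
three `C_3`-factors or into three `C_7`-factors. -/
def tradePairs : List (Fin 42 × Fin 42) :=
  [(4, 16), (5, 8), (17, 2)]

/-- The differences in `{1, …, 20}` that, up to sign, occur in no triple of `tradePairs`. -/
def coreDifferences : List (Fin 42) :=
  [3, 6, 9, 12, 15, 18, 7, 14, 1, 10, 11]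

theorem hasCayleyFactorization_triangleDifferences_triangles : ∀ p ∈ tradePairs,
    HasCayleyFactorization (triangleDifferences p) 3 7 3 0 := by
  refine fun p hp => ⟨(multiples 1 3).map fun s =>
    translates [s] (translates (multiples 3 14) [[0, p.1, p.1 + p.2]]), [], ?_⟩
  revert p
  decide +kernel

theorem hasCayleyFactorization_triangleDifferences_heptagons : ∀ p ∈ tradePairs,
    HasCayleyFactorization (triangleDifferences p) 3 7 0 3 := by
  have hfour : HasCayleyFactorization (triangleDifferences (4, 16)) 3 7 0 3 :=
    ⟨[], [[0, 4, 8, 12, 38, 16, 20], [0, 38, 34, 8, 30, 4, 26], [0, 16, 12, 34, 18, 38, 22]].map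
      fun c => translates (multiples 7 6) [c], by decide +kernel⟩
  -- Up to sign, `{5, 8, 13} = 37 * {1, 10, 11}` and `{17, 2, 19} = 25 * {1, 10, 11}`.
  have hfive : HasCayleyFactorization (triangleDifferences (5, 8)) 3 7 0 3 :=
    ⟨[], heptagonTriple 37, by decide +kernel⟩
  have hseventeen : HasCayleyFactorization (triangleDifferences (17, 2)) 3 7 0 3 :=
    ⟨[], heptagonTriple 25, by decide +kernel⟩
  simpa [tradePairs] using ⟨hfour, hfive, hseventeen⟩

theorem hasCayleyFactorization_core_11_0 :
    HasCayleyFactorization coreDifferences 3 7 11 0 :=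
  ⟨sixTranslates
    [[0, 9, 15], [1, 10, 40], [2, 14, 20], [3, 27, 34], [4, 18, 28], [5, 8, 19],
     [6, 17, 41], [7, 13, 37], [11, 23, 38], [12, 24, 30], [16, 22, 31], [21, 32, 33],
     [25, 36, 39], [26, 29, 35]] ++
    [[[1, 2, 16], [0, 27, 41]], [[1, 4, 11], [0, 32, 39]], [[2, 34, 35], [0, 1, 33]],
     [[3, 4, 35], [0, 7, 14]]].map (translates (multiples 6 7)), [], by decide +kernel⟩

theorem hasCayleyFactorization_core_10_1 :
    HasCayleyFactorization coreDifferences 3 7 10 1 :=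
  ⟨sixTranslates
    [[0, 12, 15], [1, 2, 34], [3, 17, 27], [4, 28, 39], [5, 14, 32], [6, 24, 38],
     [7, 18, 25], [8, 9, 20], [10, 37, 40], [11, 26, 35], [13, 22, 23], [16, 19, 31],
     [21, 33, 36], [29, 30, 41]] ++
    [[[1, 8, 15], [0, 28, 35]], [[1, 29, 32], [0, 9, 10]], [[2, 5, 16], [0, 1, 33]]].map
      (translates (multiples 6 7)), [heptagonCosets 1], by decide +kernel⟩

theorem hasCayleyFactorization_core_9_2 :
    HasCayleyFactorization coreDifferences 3 7 9 2 :=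
  ⟨sixTranslates
    [[0, 7, 10], [1, 8, 32], [2, 9, 12], [3, 30, 31], [4, 11, 18], [5, 19, 20],
     [6, 15, 24], [13, 22, 37], [14, 28, 29], [16, 25, 40], [17, 26, 35], [21, 36, 39],
     [23, 33, 34], [27, 38, 41]] ++
    [[[1, 33, 40], [0, 11, 14]], [[2, 3, 34], [0, 31, 41]]].map (translates (multiples 6 7)),
    [heptagonCosets 1, heptagonCosets 2], by decide +kernel⟩

theorem hasCayleyFactorization_core_2_9 :
    HasCayleyFactorization coreDifferences 3 7 2 9 :=
  ⟨[triangleCosets, translates (multiples 3 14) [[0, 1, 11]]],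
    sixTranslates (translates [0, 21]
    [[0, 24, 34, 23, 33, 6, 39], [1, 10, 37, 19, 30, 29, 36], [4, 5, 32, 41, 17, 14, 7]]) ++
    [heptagonCosets 1, heptagonCosets 2], by decide +kernel⟩

theorem hasCayleyFactorization_core_1_10 :
    HasCayleyFactorization coreDifferences 3 7 1 10 :=
  ⟨[triangleCosets], sixTranslates (translates [0, 21]
    [[0, 7, 38, 37, 27, 18, 11], [1, 10, 13, 20, 30, 15, 12], [2, 3, 4, 19, 29, 14, 5]]) ++
    [heptagonCosets 1, heptagonCosets 2, heptagonCosets 3], by decide +kernel⟩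

theorem hasCayleyFactorization_core_0_11 :
    HasCayleyFactorization coreDifferences 3 7 0 11 :=
  ⟨[], sixTranslates (translates [0, 21]
    [[0, 28, 25, 1, 13, 6, 39], [2, 35, 32, 5, 19, 10, 37], [3, 17, 41, 29, 36, 9, 33]]) ++
    heptagonCosets 1 :: heptagonTriple 1, by decide +kernel⟩

theorem hasCayleyFactorization_core : ∀ β ∈ [0, 1, 2, 9, 10, 11],
    HasCayleyFactorization coreDifferences 3 7 (11 - β) β := by
  simpa using ⟨hasCayleyFactorization_core_11_0, hasCayleyFactorization_core_10_1,
    hasCayleyFactorization_core_9_2, hasCayleyFactorization_core_2_9,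
    hasCayleyFactorization_core_1_10, hasCayleyFactorization_core_0_11⟩

theorem top_sdiff_cayley_eq : (⊤ : SimpleGraph (Fin 42)) \ cayley (Fin 42) {21} =
    cayley (Fin 42) {d | d ∈ tradePairs.flatMap triangleDifferences ++ coreDifferences} := by
  have hdiff : ∀ d : Fin 42, d ≠ 0 → (¬(-d = 21 ∨ d = 21) ↔
      -d ∈ tradePairs.flatMap triangleDifferences ++ coreDifferences ∨
      d ∈ tradePairs.flatMap triangleDifferences ++ coreDifferences) := by
    decide +kernel
  ext u v
  by_cases huv : u = v
  · simp [huv]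
  · have := hdiff (v - u) (sub_ne_zero.2 (Ne.symm huv))
    rw [neg_sub] at this
    simpa [cayley, huv] using this

theorem hw_42_of_hasCayleyFactorization {α β : ℕ} (h : HasCayleyFactorization
    (tradePairs.flatMap triangleDifferences ++ coreDifferences) 3 7 α β) : HW 42 3 7 α β := by
  refine ⟨cayley (Fin 42) {21}, fun hodd => absurd hodd (by decide), fun _ => ?_, ?_⟩
  · exact isOneFactor_cayley_singleton (by decide) (by decide)
  · rw [top_sdiff_cayley_eq]
    exact h.isHWGraph Nat.prime_three Nat.prime_seven (by decide +kernel)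

end CyclicGroup

theorem stmt_17 (α β : ℕ) : HW 42 3 7 α β ↔ α + β = 20 := by
  constructor
  · intro h
    have := h.two_mul_add_two (by decide) (by decide)
    lia
  · intro h
    have hsplit : ∀ β ≤ 20, ∃ t ≤ 3, ∃ r ∈ [0, 1, 2, 9, 10, 11],
        3 * (3 - t) + (11 - r) = 20 - β ∧ 3 * t + r = β := by decide
    obtain ⟨t, ht, r, hr, hα, hβ⟩ := hsplit β (by lia)
    have hst : 3 - t + t = tradePairs.length := Nat.sub_add_cancel ht
    have htrades := HasCayleyFactorization.flatMap
      hasCayleyFactorization_triangleDifferences_triangles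
      hasCayleyFactorization_triangleDifferences_heptagons hst
    have hfactors := htrades.append (hasCayleyFactorization_core r hr)
    rw [hα, hβ, ← h, Nat.add_sub_cancel] at hfactors
    exact hw_42_of_hasCayleyFactorization hfactors
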